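/- For g₁, g₂ in ℚ[χ]/⟨1+χ+⋯+χ^{2^K-1}⟩: if w_l(g₁) ≠ w_l(g₂) then w_l(g₁+g₂) = min(w_l(g₁), w_l(g₂)), and if w_l(g₁) = w_l(g₂) (both finite) then w_l(g₁+g₂) > w_l(g₁). -/

import Mathlib

noncomputable section
open Polynomial

/-- The quotient ring ℚ[χ]/⟨1+χ+⋯+χ^{2^K-1}⟩. -/
abbrev QB (K : ℕ) :=
  Polynomial ℚ ⧸ Ideal.span {(∑ i ∈ Finset.range (2 ^ K), X ^ i : Polynomial ℚ)}

def mkB (K : ℕ) : Polynomial ℚ →+* QB K := Ideal.Quotient.mk _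

/-- The quotient ring ℚ[χ]/⟨1+χ^{2^l}⟩. -/
abbrev QS (l : ℕ) := Polynomial ℚ ⧸ Ideal.span {(1 + X ^ (2 ^ l) : Polynomial ℚ)}

def mkS (l : ℕ) : Polynomial ℚ →+* QS l := Ideal.Quotient.mk _

/-- `IsNF K l g w` : g admits a w_l-normal form pr_l(g) = (2^a/u)·((1-χ)^b·v₁ + 2·v₂)
with u, v₁(1) odd, 0 ≤ b < 2^l, and w = a + b/2^l. -/
def IsNF (K l : ℕ) (g : QB K) (w : ℚ) : Prop :=
  ∃ (p : Polynomial ℚ) (a u : ℤ) (b : ℕ) (v₁ v₂ : Polynomial ℤ),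
    mkB K p = g ∧ Odd u ∧ b < 2 ^ l ∧ Odd (v₁.eval 1) ∧
    mkS l p = mkS l (C ((2 : ℚ) ^ a / (u : ℚ)) *
      ((1 - X) ^ b * v₁.map (Int.castRingHom ℚ) + 2 * v₂.map (Int.castRingHom ℚ))) ∧
    w = a + (b : ℚ) / 2 ^ l

open Classical in
/-- The valuation w_l : w_l(g) = a + b/2^l from the normal form, and ∞ if
1+χ^{2^l} divides g (i.e. no normal form exists). -/
def wl (K l : ℕ) (g : QB K) : WithTop ℚ :=
  if h : ∃ w : ℚ, IsNF K l g w then (h.choose : WithTop ℚ) else ⊤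

/-! Sending `χ` to a primitive `2^(l+1)`-th root of unity `ζ` identifies `QS l` with the cyclotomic
field `ℚ(ζ)`. There `2` is totally ramified: `(2) = (1 - ζ)^(2^l)`, with residue field `𝔽₂`. An
integer polynomial in `ζ` is a unit at `1 - ζ` exactly when its value at `1` is odd, so the element
`2^a/u * ((1 - ζ)^b * v₁ + 2 * v₂)` has `(1 - ζ)`-adic order `2^l * a + b`, and every nonzero
element has such a form. Hence `wl` is the pullback of the `(1 - ζ)`-adic order divided by `2^l`.
The first claim is the ultrametric law, and the second holds because `1 + 1 = 0` in the residue
field. -/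

open IsDedekindDomain NumberField WithZero

-- `hres` says that the residue field of `v` has two elements.
lemma valuation_add_lt_of_eq {F Γ : Type*} [Field F] [LinearOrderedCommGroupWithZero Γ]
    {v : Valuation F Γ} (hres : ∀ x, v x = 1 → v (x - 1) < 1) {x y : F} (hxy : v x = v y)
    (hx : v x ≠ 0) : v (x + y) < v x := by
  have hy : y ≠ 0 := v.ne_zero_iff.1 (hxy ▸ hx)
  have hunit : v (-x / y) = 1 := by rw [map_div₀, v.map_neg, hxy, div_self (hxy ▸ hx)]
  calc v (x + y) = v (-x / y - 1) * v x := by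
        rw [hxy, ← map_mul, ← v.map_neg]; congr 1; field_simp; ring
    _ < v x := mul_lt_of_lt_one_left (zero_lt_iff.2 hx) (hres _ hunit)

/-- The additive order, with values in `ℚ ∪ {∞}`, attached to a value `x` of a multiplicative
`ℤᵐ⁰`-valued valuation, divided by a ramification index `e`: it sends `exp (-n)` to `n / e` and
`0` to `⊤`. -/
def normalizedOrder (e : ℕ) (x : ℤᵐ⁰) : WithTop ℚ :=
  if x = 0 then ⊤ else ((-log x / e : ℚ) : WithTop ℚ)

lemma normalizedOrder_exp_neg (e : ℕ) (n : ℤ) :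
    normalizedOrder e (exp (-n)) = ((n / e : ℚ) : WithTop ℚ) := by
  simp [normalizedOrder]

lemma normalizedOrder_eq_top_iff {e : ℕ} {x : ℤᵐ⁰} : normalizedOrder e x = ⊤ ↔ x = 0 := by
  simp [normalizedOrder]

lemma coe_eq_normalizedOrder_iff {e : ℕ} {x : ℤᵐ⁰} {w : ℚ} :
    (w : WithTop ℚ) = normalizedOrder e x ↔ ∃ n : ℤ, x = exp (-n) ∧ w = n / e := by
  rcases eq_or_ne x 0 with rfl | hx
  · simp [normalizedOrder, exp_ne_zero.symm]
  · obtain ⟨n, rfl⟩ : ∃ n : ℤ, x = exp (-n) := ⟨-log x, by rw [neg_neg, exp_log hx]⟩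
    rw [normalizedOrder_exp_neg, WithTop.coe_inj]
    simp only [exp_inj, neg_inj, exists_eq_left']

lemma normalizedOrder_strictAnti {e : ℕ} (he : 0 < e) : StrictAnti (normalizedOrder e) := by
  intro x y hxy
  have hy : y ≠ 0 := (zero_le.trans_lt hxy).ne'
  rcases eq_or_ne x 0 with rfl | hx
  · simp [normalizedOrder, hy]
  · simp only [normalizedOrder, hx, hy, if_false, WithTop.coe_lt_coe]
    gcongr
    exact (log_lt_log hx hy).2 hxy

lemma algebraMap_aeval_toInteger {L : Type*} [Field L] {ζ : L} {n : ℕ} [NeZero n]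
    (hζ : IsPrimitiveRoot ζ n) (s : ℤ[X]) :
    algebraMap (𝓞 L) L (aeval hζ.toInteger s) = aeval ζ s :=
  (aeval_algebraMap_apply L hζ.toInteger s).symm

lemma exists_aeval_toInteger_eq {L : Type*} [Field L] [CharZero L] {ζ : L} {n : ℕ} [NeZero n]
    [IsCyclotomicExtension {n} ℚ L] (hζ : IsPrimitiveRoot ζ n) (α : 𝓞 L) :
    ∃ s : ℤ[X], aeval hζ.toInteger s = α := by
  obtain ⟨s, hs⟩ := hζ.integralPowerBasis.exists_eq_aeval' α
  exact ⟨s, by rw [hs, hζ.integralPowerBasis_gen]⟩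

section PrimePower

variable {p k : ℕ} [Fact p.Prime] {L : Type*} [Field L] [NumberField L]
  [IsCyclotomicExtension {p ^ (k + 1)} ℚ L] {ζ : L} (hζ : IsPrimitiveRoot ζ (p ^ (k + 1)))

/-- The prime ideal `(ζ - 1)` of the ring of integers of the `p ^ (k + 1)`-th cyclotomic field,
the only one above `p`. -/
def zetaSubOnePrime : HeightOneSpectrum (𝓞 L) where
  asIdeal := Ideal.span {hζ.toInteger - 1}
  isPrime := IsCyclotomicExtension.Rat.isPrime_span_zeta_sub_one p k hζ
  ne_bot := IsCyclotomicExtension.Rat.span_zeta_sub_one_ne_bot p k hζ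

/-- The `(ζ - 1)`-adic valuation of the `p ^ (k + 1)`-th cyclotomic field, written
multiplicatively: an element of order `n` has value `exp (-n)`. -/
abbrev zetaSubOneValuation : Valuation L ℤᵐ⁰ := (zetaSubOnePrime hζ).valuation L

lemma zetaSubOneValuation_one_sub_zeta : zetaSubOneValuation hζ (1 - ζ) = exp (-1) := by
  rw [Valuation.map_sub_swap]
  exact (HeightOneSpectrum.valuation_of_algebraMap ..).trans
    ((zetaSubOnePrime hζ).intValuation_singleton hζ.zeta_sub_one_prime.ne_zero rfl)

lemma span_natCast_eq_zetaSubOnePrime_pow :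
    Ideal.span {(p : 𝓞 L)} = (zetaSubOnePrime hζ).asIdeal ^ Module.finrank ℚ L := by
  rw [zetaSubOnePrime, ← IsCyclotomicExtension.Rat.map_eq_span_zeta_sub_one_pow p k hζ,
    Ideal.map_span, Set.image_singleton, map_natCast]

lemma zetaSubOneValuation_natCast_prime :
    zetaSubOneValuation hζ p = exp (-Module.finrank ℚ L : ℤ) := by
  rw [← map_natCast (algebraMap (𝓞 L) L), HeightOneSpectrum.valuation_of_algebraMap,
    HeightOneSpectrum.intValuation_eq_exp_neg_multiplicity _ (NeZero.natCast_ne p (𝓞 L)),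
    span_natCast_eq_zetaSubOnePrime_pow hζ,
    multiplicity_pow_self (zetaSubOnePrime hζ).ne_bot
      (Ideal.isUnit_iff.not.2 (zetaSubOnePrime hζ).isPrime.ne_top)]

lemma natCast_pow_dvd_iff_valuation_le {α : 𝓞 L} {j : ℕ} :
    (p : 𝓞 L) ^ j ∣ α ↔
      zetaSubOneValuation hζ (algebraMap (𝓞 L) L α) ≤ zetaSubOneValuation hζ p ^ j := by
  have hexp : zetaSubOneValuation hζ p ^ j = exp (-((Module.finrank ℚ L * j : ℕ) : ℤ)) := by
    rw [zetaSubOneValuation_natCast_prime, ← exp_nsmul, nsmul_eq_mul]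
    push_cast
    ring_nf
  rw [hexp, HeightOneSpectrum.valuation_of_algebraMap,
    HeightOneSpectrum.intValuation_le_pow_iff_mem, pow_mul,
    ← span_natCast_eq_zetaSubOnePrime_pow, Ideal.span_singleton_pow, Ideal.mem_span_singleton]

lemma zetaSubOneValuation_aeval_le_one (s : ℤ[X]) : zetaSubOneValuation hζ (aeval ζ s) ≤ 1 := by
  rw [← algebraMap_aeval_toInteger hζ]
  exact HeightOneSpectrum.valuation_le_one ..

lemma zetaSubOneValuation_aeval_lt_one_iff (s : ℤ[X]) :
    zetaSubOneValuation hζ (aeval ζ s) < 1 ↔ (p : ℤ) ∣ s.eval 1 := by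
  have hsub : hζ.toInteger - 1 ∣ aeval hζ.toInteger s - (s.eval 1 : ℤ) := by
    obtain ⟨q, hq⟩ := X_sub_C_dvd_sub_C_eval (a := (1 : ℤ)) (p := s)
    exact ⟨aeval hζ.toInteger q, by simpa using congrArg (aeval hζ.toInteger) hq⟩
  rw [← IsCyclotomicExtension.Rat.zeta_sub_one_dvd_intCast_iff p k hζ,
    ← dvd_iff_dvd_of_dvd_sub hsub, ← algebraMap_aeval_toInteger hζ,
    HeightOneSpectrum.valuation_lt_one_iff_mem]
  exact Ideal.mem_span_singleton

lemma zetaSubOneValuation_aeval_eq_one_iff (s : ℤ[X]) :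
    zetaSubOneValuation hζ (aeval ζ s) = 1 ↔ ¬ (p : ℤ) ∣ s.eval 1 := by
  rw [← zetaSubOneValuation_aeval_lt_one_iff hζ, not_lt,
    (zetaSubOneValuation_aeval_le_one hζ s).ge_iff_eq]

lemma zetaSubOneValuation_intCast_eq_one {n : ℤ} (hn : ¬ (p : ℤ) ∣ n) :
    zetaSubOneValuation hζ n = 1 := by
  simpa using (zetaSubOneValuation_aeval_eq_one_iff hζ (C n)).2 (by rwa [eval_C])

-- As `(ζ - 1)` is the only prime above `p`, the `p`-part of a denominator of `x` cancels.
lemma exists_intCast_mul_eq_aeval {x : L} (hx : zetaSubOneValuation hζ x ≤ 1) :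
    ∃ (u : ℤ) (s : ℤ[X]), ¬ (p : ℤ) ∣ u ∧ u * x = aeval ζ s := by
  have hp : (p : L) ≠ 0 := NeZero.natCast_ne p L
  have halg : IsAlgebraic ℤ x :=
    (IsFractionRing.isAlgebraic_iff ℤ ℚ L).2 (Algebra.IsAlgebraic.isAlgebraic x)
  obtain ⟨d, hd, hdx_int⟩ := halg.exists_integral_multiple
  obtain ⟨α, hα⟩ : ∃ α : 𝓞 L, algebraMap (𝓞 L) L α = d • x := ⟨⟨d • x, hdx_int⟩, rfl⟩
  have hfin : FiniteMultiplicity (p : ℤ) d :=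
    Int.finiteMultiplicity_iff.2 ⟨by simpa using (Fact.out : p.Prime).ne_one, hd⟩
  obtain ⟨u, hdu, hu⟩ := hfin.exists_eq_pow_mul_and_not_dvd
  generalize multiplicity (p : ℤ) d = j at hdu
  have hdx : d • x = p ^ j * (u * x) := by simp [hdu, mul_assoc]
  have hdvd : (p : 𝓞 L) ^ j ∣ α := by
    rw [natCast_pow_dvd_iff_valuation_le hζ, hα, hdx, map_mul, map_pow, map_mul,
      zetaSubOneValuation_intCast_eq_one hζ hu, one_mul]
    exact mul_le_of_le_one_right' hx
  obtain ⟨β, rfl⟩ := hdvd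
  obtain ⟨s, rfl⟩ := exists_aeval_toInteger_eq hζ β
  refine ⟨u, s, hu, mul_left_cancel₀ (pow_ne_zero j hp) ?_⟩
  rw [← hdx, ← hα, ← algebraMap_aeval_toInteger hζ, map_mul, map_pow, map_natCast]

lemma zetaSubOneValuation_zpow_mul_pow (a : ℤ) (b : ℕ) :
    zetaSubOneValuation hζ (p ^ a * (1 - ζ) ^ b) = exp (-(Module.finrank ℚ L * a + b) : ℤ) := by
  rw [map_mul, map_zpow₀, map_pow, zetaSubOneValuation_natCast_prime,
    zetaSubOneValuation_one_sub_zeta, ← exp_zsmul, ← exp_nsmul, ← exp_add]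
  congr 1
  simp only [smul_eq_mul, nsmul_eq_mul]
  ring

lemma zetaSubOneValuation_normalForm {a u : ℤ} {b : ℕ} {v₁ v₂ : ℤ[X]} (hu : ¬ (p : ℤ) ∣ u)
    (hb : b < Module.finrank ℚ L) (hv₁ : ¬ (p : ℤ) ∣ v₁.eval 1) :
    zetaSubOneValuation hζ (p ^ a / u * ((1 - ζ) ^ b * aeval ζ v₁ + p * aeval ζ v₂)) =
      exp (-(Module.finrank ℚ L * a + b) : ℤ) := by
  have hlead : zetaSubOneValuation hζ ((1 - ζ) ^ b * aeval ζ v₁) =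
      zetaSubOneValuation hζ ((1 - ζ) ^ b) := by
    rw [map_mul, (zetaSubOneValuation_aeval_eq_one_iff hζ v₁).2 hv₁, mul_one]
  have hrest : zetaSubOneValuation hζ (p * aeval ζ v₂) <
      zetaSubOneValuation hζ ((1 - ζ) ^ b * aeval ζ v₁) :=
    calc zetaSubOneValuation hζ (p * aeval ζ v₂) ≤ zetaSubOneValuation hζ p := by
          rw [map_mul]; exact mul_le_of_le_one_right' (zetaSubOneValuation_aeval_le_one hζ v₂)
      _ < zetaSubOneValuation hζ ((1 - ζ) ^ b * aeval ζ v₁) := by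
          rw [hlead, zetaSubOneValuation_natCast_prime, map_pow, zetaSubOneValuation_one_sub_zeta,
            ← exp_nsmul, exp_lt_exp]
          simpa using hb
  rw [map_mul, Valuation.map_add_eq_of_lt_left _ hrest, hlead, map_div₀,
    zetaSubOneValuation_intCast_eq_one hζ hu, div_one, ← map_mul, zetaSubOneValuation_zpow_mul_pow]

lemma exists_normalForm {x : L} {a : ℤ} {b : ℕ}
    (hx : zetaSubOneValuation hζ x = exp (-(Module.finrank ℚ L * a + b) : ℤ)) :
    ∃ (u : ℤ) (s : ℤ[X]), ¬ (p : ℤ) ∣ u ∧ ¬ (p : ℤ) ∣ s.eval 1 ∧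
      x = p ^ a / u * ((1 - ζ) ^ b * aeval ζ s) := by
  rw [← zetaSubOneValuation_zpow_mul_pow hζ a b] at hx
  have hne : p ^ a * (1 - ζ) ^ b ≠ 0 := by
    rw [← (zetaSubOneValuation hζ).ne_zero_iff, zetaSubOneValuation_zpow_mul_pow]
    exact exp_ne_zero
  have hunit : zetaSubOneValuation hζ (x / (p ^ a * (1 - ζ) ^ b)) = 1 := by
    rw [map_div₀, hx, div_self ((Valuation.ne_zero_iff _).2 hne)]
  obtain ⟨u, s, hu, hs⟩ := exists_intCast_mul_eq_aeval hζ hunit.le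
  have hu0 : (u : L) ≠ 0 := by rintro h; exact hu (by simp [Int.cast_eq_zero.1 h])
  refine ⟨u, s, hu, ?_, ?_⟩
  · rw [← zetaSubOneValuation_aeval_eq_one_iff hζ, ← hs, map_mul, hunit,
      zetaSubOneValuation_intCast_eq_one hζ hu, one_mul]
  · rw [← hs]
    have hp := left_ne_zero_of_mul hne
    have hζ1 := right_ne_zero_of_mul hne
    field_simp

end PrimePower

lemma wl_eq_of_isNF_iff {K l : ℕ} {g : QB K} {t : WithTop ℚ}
    (h : ∀ w : ℚ, IsNF K l g w ↔ (w : WithTop ℚ) = t) : wl K l g = t := by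
  unfold wl
  split_ifs with hex
  · exact (h _).1 hex.choose_spec
  · by_contra ht
    obtain ⟨w, rfl⟩ := WithTop.ne_top_iff_exists.1 (Ne.symm ht)
    exact hex ⟨w, (h w).2 rfl⟩

section TwoPower

variable {l : ℕ} {L : Type*} [Field L] {ζ : L}

lemma cyclotomic_two_pow_succ (l : ℕ) (R : Type*) [CommRing R] :
    cyclotomic (2 ^ (l + 1)) R = 1 + X ^ 2 ^ l := by
  simp [cyclotomic_prime_pow_eq_geom_sum Nat.prime_two, Finset.sum_range_succ]

lemma mkS_eq_mkS_iff [CharZero L] (hζ : IsPrimitiveRoot ζ (2 ^ (l + 1))) {f g : ℚ[X]} :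
    mkS l f = mkS l g ↔ aeval ζ f = aeval ζ g := by
  rw [mkS, Ideal.Quotient.eq, Ideal.mem_span_singleton, ← cyclotomic_two_pow_succ,
    cyclotomic_eq_minpoly_rat hζ (by positivity), minpoly.dvd_iff, map_sub, sub_eq_zero]

lemma aeval_eq_of_mkB_eq [CharZero L] (hζ : IsPrimitiveRoot ζ (2 ^ (l + 1))) {K : ℕ}
    (hl : l < K) {f g : ℚ[X]} (h : mkB K f = mkB K g) : aeval ζ f = aeval ζ g := by
  have hgeom : ∑ i ∈ Finset.range (2 ^ K), ζ ^ i = 0 := by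
    rw [geom_sum_eq (hζ.ne_one (Nat.one_lt_two_pow l.succ_ne_zero)),
      (hζ.pow_eq_one_iff_dvd _).2 (pow_dvd_pow 2 hl), sub_self, zero_div]
  rw [mkB, Ideal.Quotient.eq, Ideal.mem_span_singleton] at h
  obtain ⟨r, hr⟩ := h
  rw [← sub_eq_zero, ← map_sub, hr, map_mul]
  simp [hgeom]

lemma aeval_normalForm [CharZero L] (ζ : L) (a u : ℤ) (b : ℕ) (v₁ v₂ : ℤ[X]) :
    aeval ζ (C ((2 : ℚ) ^ a / (u : ℚ)) *
      ((1 - X) ^ b * v₁.map (Int.castRingHom ℚ) + 2 * v₂.map (Int.castRingHom ℚ))) =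
    2 ^ a / u * ((1 - ζ) ^ b * aeval ζ v₁ + 2 * aeval ζ v₂) := by
  have hmap (v : ℤ[X]) : aeval ζ (v.map (Int.castRingHom ℚ)) = aeval ζ v :=
    aeval_map_algebraMap ℚ ζ v
  simp only [map_mul, map_add, map_sub, map_one, map_pow, map_ofNat, aeval_X, aeval_C, map_div₀,
    map_zpow₀, map_intCast, hmap]

variable [NumberField L] [IsCyclotomicExtension {2 ^ (l + 1)} ℚ L]
  (hζ : IsPrimitiveRoot ζ (2 ^ (l + 1)))

lemma zetaSubOneValuation_sub_one_lt_one {x : L} (hx : zetaSubOneValuation hζ x = 1) :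
    zetaSubOneValuation hζ (x - 1) < 1 := by
  obtain ⟨u, s, hu, hs⟩ := exists_intCast_mul_eq_aeval hζ hx.le
  have hvu := zetaSubOneValuation_intCast_eq_one hζ hu
  have hs_odd : ¬ ((2 : ℕ) : ℤ) ∣ s.eval 1 := by
    rw [← zetaSubOneValuation_aeval_eq_one_iff hζ, ← hs, map_mul, hvu, hx, one_mul]
  have hmul : u * (x - 1) = aeval ζ (s - C u) := by simp [← hs, mul_sub]
  rw [← one_mul (zetaSubOneValuation hζ _), ← hvu, ← map_mul, hmul, hvu,
    zetaSubOneValuation_aeval_lt_one_iff, eval_sub, eval_C]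
  omega

lemma isNF_mkB_iff {K : ℕ} (hl : l < K) (f : ℚ[X]) (w : ℚ) :
    IsNF K l (mkB K f) w ↔
      (w : WithTop ℚ) = normalizedOrder (2 ^ l) (zetaSubOneValuation hζ (aeval ζ f)) := by
  have hrank : Module.finrank ℚ L = 2 ^ l := by
    rw [IsCyclotomicExtension.Rat.finrank (2 ^ (l + 1)) L,
      Nat.totient_prime_pow_succ Nat.prime_two, Nat.add_one_sub_one, mul_one]
  have hodd (n : ℤ) : ¬ ((2 : ℕ) : ℤ) ∣ n ↔ Odd n := by
    rw [Nat.cast_ofNat, ← even_iff_two_dvd, Int.not_even_iff_odd]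
  rw [coe_eq_normalizedOrder_iff]
  constructor
  · rintro ⟨f', a, u, b, v₁, v₂, hf', hu, hb, hv₁, hnf, rfl⟩
    rw [mkS_eq_mkS_iff hζ, aeval_eq_of_mkB_eq hζ hl hf', aeval_normalForm] at hnf
    refine ⟨2 ^ l * a + b, ?_, by push_cast; field_simp⟩
    rw [hnf]
    simpa [hrank] using zetaSubOneValuation_normalForm hζ (a := a) (v₂ := v₂) ((hodd u).2 hu)
      (hrank ▸ hb) ((hodd _).2 hv₁)
  · rintro ⟨n, hn, rfl⟩
    obtain ⟨a, b, hb, rfl⟩ : ∃ (a : ℤ) (b : ℕ), b < 2 ^ l ∧ n = 2 ^ l * a + b := by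
      have hpow : (0 : ℤ) < 2 ^ l := by positivity
      refine ⟨n / 2 ^ l, (n % 2 ^ l).toNat, by zify; omega, ?_⟩
      rw [Int.toNat_of_nonneg (Int.emod_nonneg n hpow.ne'), Int.mul_ediv_add_emod]
    obtain ⟨u, s, hu, hs, hf⟩ := exists_normalForm hζ (a := a) (b := b) (by simpa [hrank] using hn)
    refine ⟨f, a, u, b, s, 0, rfl, (hodd u).1 hu, hb, (hodd _).1 hs, ?_, by push_cast; field_simp⟩
    rw [mkS_eq_mkS_iff hζ, aeval_normalForm]
    simpa using hf

lemma wl_mkB {K : ℕ} (hl : l < K) (f : ℚ[X]) :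
    wl K l (mkB K f) = normalizedOrder (2 ^ l) (zetaSubOneValuation hζ (aeval ζ f)) :=
  wl_eq_of_isNF_iff fun w => isNF_mkB_iff hζ hl f w

end TwoPower

/-- If w_l(g₁) ≠ w_l(g₂) then w_l(g₁+g₂) = min(w_l(g₁), w_l(g₂)); if
w_l(g₁) = w_l(g₂) (both finite) then w_l(g₁+g₂) > w_l(g₁). -/
theorem stmt11 (K l : ℕ) (hK : 1 ≤ K) (hl : l ≤ K - 1) (g₁ g₂ : QB K) :
    (wl K l g₁ ≠ wl K l g₂ →
      wl K l (g₁ + g₂) = min (wl K l g₁) (wl K l g₂)) ∧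
    (wl K l g₁ = wl K l g₂ → wl K l g₁ ≠ ⊤ →
      wl K l (g₁ + g₂) > wl K l g₁) := by
  obtain ⟨f₁, rfl⟩ : ∃ f, mkB K f = g₁ := Ideal.Quotient.mk_surjective g₁
  obtain ⟨f₂, rfl⟩ : ∃ f, mkB K f = g₂ := Ideal.Quotient.mk_surjective g₂
  have hlK : l < K := by omega
  have : IsCyclotomicExtension {2 ^ (l + 1)} ℚ (CyclotomicField (2 ^ (l + 1)) ℚ) :=
    CyclotomicField.isCyclotomicExtension _ ℚ
  have hζ := IsCyclotomicExtension.zeta_spec (2 ^ (l + 1)) ℚ (CyclotomicField (2 ^ (l + 1)) ℚ)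
  have hanti := normalizedOrder_strictAnti (Nat.two_pow_pos l)
  rw [← map_add, wl_mkB hζ hlK, wl_mkB hζ hlK, wl_mkB hζ hlK, map_add, hanti.injective.ne_iff,
    hanti.injective.eq_iff, Ne, Ne, normalizedOrder_eq_top_iff]
  refine ⟨fun hne => ?_, fun heq hfin => hanti ?_⟩
  · rw [Valuation.map_add_of_distinct_val _ hne, hanti.antitone.map_max]
  · exact valuation_add_lt_of_eq (fun _ => zetaSubOneValuation_sub_one_lt_one hζ) heq hfin
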